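/- arXiv:0711.2223 — 4 statements merged into one kernel-verified Lean document; each statement's English description precedes it below -/
import Mathlib

section
/- If an involution w ∈ I(S_n) has no long-crossing pair, then w is Boolean. -/
/-!
Write `r_u(p, q) = #{i ≤ p : u i > q}`. By Ehresmann's criterion (`bruhatLE_iff`) the Bruhat order
is the pointwise order of these corner counts, and for involutions the range `p ≤ q` suffices
(`rk_le_of_upper`).

View an involution as a set of arcs `i < w i`, and let its support be the set of edges
`{k, k + 1}` lying under some arc, that is, with `r_w(k, k) ≥ 1`. If `w` has no long-crossing
pair, then two arcs overlap in at most one edge `{k, k + 1}`, with one arc ending at `k + 1` and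
the other starting at `k`. So `r_w(p, q) ≤ 1` for `p < q`, `r_w(k, k) ≤ 2`, and no two doubly
covered edges are adjacent. The isomorphism sends an involution `u ≤ w` to its support, a subset
of the support of `w`.

* The support of `u` determines the corner counts of `u` on `p ≤ q`: for `p < q`,
  `r_u(p, q) = 1` exactly when `r_w(p, q) = 1` and all edges from `p` to `q` are in the support
  (`cov_of_cov`), and `r_u(k, k) = 2` exactly when `r_w(k, k) = 2` and the edges `k - 1`, `k`,
  `k + 1` are in the support (`dbl_of_dbl`). Both conditions are monotone in the support, so
  inclusion of supports is equivalent to the Bruhat order (`rk_le_of_support`), which also gives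
  injectivity.
* Every subset of the support of `w` occurs, because a single edge can be deleted: a doubly
  covered edge by uncrossing its two arcs (`exists_delete_dbl`), a simply covered one by cutting
  its arc (`exists_delete_single`). The result is again below `w` and without long-crossing pairs,
  so edges can be deleted one after another (`exists_of_subset`).
-/

/-- The number of inversions of a permutation. -/
def invCount {n : ℕ} (π : Equiv.Perm (Fin n)) : ℕ :=
  (Finset.univ.filter fun p : Fin n × Fin n => p.1 < p.2 ∧ π p.2 < π p.1).card

/-- `w` is an involution: an element of order at most two. -/
def IsInvolution {n : ℕ} (w : Equiv.Perm (Fin n)) : Prop := w * w = 1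

/-- A transposition in the symmetric group. -/
def IsTransposition {n : ℕ} (t : Equiv.Perm (Fin n)) : Prop :=
  ∃ i j : Fin n, i ≠ j ∧ t = Equiv.swap i j

/-- The Bruhat order on the symmetric group: `u ≤ w` iff `w = u * t₁ * ⋯ * tₘ` for
transpositions `t₁, …, tₘ` such that the number of inversions strictly increases
along the partial products `u * t₁ * ⋯ * tᵢ`. -/
def BruhatLE {n : ℕ} (u w : Equiv.Perm (Fin n)) : Prop :=
  ∃ ts : List (Equiv.Perm (Fin n)),
    (∀ t ∈ ts, IsTransposition t) ∧
    w = ts.foldl (· * ·) u ∧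
    ∀ k, k + 1 ≤ ts.length →
      invCount ((ts.take k).foldl (· * ·) u) < invCount ((ts.take (k + 1)).foldl (· * ·) u)

/-- An involution `w` is Boolean if the principal order ideal
`B(w) = {u ∈ I(Sₙ) : u ≤ w}` of the Bruhat order on involutions is isomorphic,
as a poset, to the Boolean lattice of all subsets of some finite set. -/
def IsBooleanInvolution {n : ℕ} (w : Equiv.Perm (Fin n)) : Prop :=
  ∃ (m : ℕ) (f : {u : Equiv.Perm (Fin n) // IsInvolution u ∧ BruhatLE u w} ≃ Finset (Fin m)),
    ∀ a b, BruhatLE a.1 b.1 ↔ f a ⊆ f b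

/-- A pair of positions `(i, j)` is long-crossing in `w` if `i < j < w j` and
`w i > j + 1`. -/
def HasLongCrossing {n : ℕ} (w : Equiv.Perm (Fin n)) : Prop :=
  ∃ i j : Fin n, (i : ℕ) < (j : ℕ) ∧ (j : ℕ) < (w j : ℕ) ∧ (j : ℕ) + 1 < (w i : ℕ)

/-! ### Corner counts and the Bruhat order -/

/-- The corner count `#{i ≤ p : u i > q}`. -/
def rk {n : ℕ} (u : Equiv.Perm (Fin n)) (p q : ℕ) : ℕ :=
  (Finset.univ.filter fun i : Fin n => (i : ℕ) ≤ p ∧ q < (u i : ℕ)).card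

/-- The map sending an inversion `(a, b)` of `u` to `(t a, t b)` if `t` keeps the order of `a, b`,
and to itself otherwise, is an injection into the inversions of `u * t` that misses `(i, j)`. -/
lemma invCount_lt_mul_swap {n : ℕ} (u : Equiv.Perm (Fin n)) {i j : Fin n} (hij : i < j)
    (h : u i < u j) : invCount u < invCount (u * Equiv.swap i j) := by
  classical
  set t := Equiv.swap i j with ht
  have ti : t i = j := Equiv.swap_apply_left i j
  have tj : t j = i := Equiv.swap_apply_right i j
  have t_o : ∀ x, x ≠ i → x ≠ j → t x = x := fun x h1 h2 => Equiv.swap_apply_of_ne_of_ne h1 h2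
  have tt : ∀ x, t (t x) = x := fun x => Equiv.swap_apply_self i j x
  clear_value t
  let φ : Fin n × Fin n → Fin n × Fin n := fun x => if t x.1 < t x.2 then (t x.1, t x.2) else x
  unfold invCount
  rw [← Finset.card_image_of_injOn (f := φ)
    (s := Finset.univ.filter fun p : Fin n × Fin n => p.1 < p.2 ∧ u p.2 < u p.1)]
  · apply Finset.card_lt_card
    rw [Finset.ssubset_iff_of_subset]
    · refine ⟨(i, j), Finset.mem_filter.2 ⟨Finset.mem_univ _, hij, by simpa [ti, tj] using h⟩, ?_⟩
      simp only [Finset.mem_image, Finset.mem_filter, Finset.mem_univ, true_and, not_exists, φ]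
      rintro ⟨a, b⟩
      have := tt a
      have := tt b
      grind
    · intro x
      simp only [Finset.mem_image, Finset.mem_filter, Finset.mem_univ, true_and, φ,
        Equiv.Perm.mul_apply]
      rintro ⟨⟨a, b⟩, h1, rfl⟩
      have := tt a
      have := tt b
      have := t_o a
      have := t_o b
      have : a ≠ b := by grind
      have : t a ≠ t b := by grind
      split_ifs <;> grind
  · rintro ⟨a, b⟩ h1 ⟨c, d⟩ h2 h3
    have := tt a
    have := tt b
    have := tt c
    have := tt d
    simp only [Finset.coe_filter, Set.mem_ofPred_eq, Finset.mem_univ, true_and] at h1 h2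
    simp only [φ] at h3
    split_ifs at h3 <;> grind

lemma rk_le_mul_swap {n : ℕ} (u : Equiv.Perm (Fin n)) {i j : Fin n} (hij : i < j)
    (h : u i < u j) (p q : ℕ) : rk u p q ≤ rk (u * Equiv.swap i j) p q := by
  classical
  unfold rk
  by_cases hp : (j : ℕ) ≤ p
  · refine Finset.card_le_card_of_injOn (Equiv.swap i j) ?_ (Equiv.injective _).injOn
    intro x hx
    simp only [Finset.coe_filter, Set.mem_ofPred_eq, Finset.mem_univ, true_and] at hx ⊢
    simp only [Equiv.Perm.mul_apply, Equiv.swap_apply_self]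
    rw [Equiv.swap_apply_def]
    split_ifs <;> grind
  · refine Finset.card_le_card fun x hx => ?_
    simp only [Finset.mem_filter, Finset.mem_univ, true_and] at hx ⊢
    simp only [Equiv.Perm.mul_apply] at hx ⊢
    rw [Equiv.swap_apply_def]
    split_ifs <;> grind

/-- Outside the box `[i, j) × [u i, u j)` the transposition does not raise the corner counts,
and inside the box it raises them by one. -/
lemma rk_mul_swap_le {n : ℕ} (u : Equiv.Perm (Fin n)) {i j : Fin n} (hij : i < j)
    (p q : ℕ) :
    rk (u * Equiv.swap i j) p q ≤ rk u p q ∨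
      ((i : ℕ) ≤ p ∧ p < j ∧ (u i : ℕ) ≤ q ∧ q < u j ∧
        rk (u * Equiv.swap i j) p q ≤ rk u p q + 1) := by
  classical
  unfold rk
  by_cases hp : (j : ℕ) ≤ p
  · left
    refine Finset.card_le_card_of_injOn (Equiv.swap i j) ?_ (Equiv.injective _).injOn
    intro x hx
    simp only [Finset.coe_filter, Set.mem_ofPred_eq, Finset.mem_univ, true_and] at hx ⊢
    simp only [Equiv.Perm.mul_apply] at hx ⊢
    refine ⟨?_, hx.2⟩
    rw [Equiv.swap_apply_def]
    split_ifs <;> grind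
  by_cases hb : (i : ℕ) ≤ p ∧ (u i : ℕ) ≤ q ∧ q < u j
  · right
    refine ⟨hb.1, by omega, hb.2.1, hb.2.2, ?_⟩
    refine le_trans (Finset.card_le_card (t := insert i _) fun x hx => ?_)
      (Finset.card_insert_le i _)
    simp only [Finset.mem_insert, Finset.mem_filter, Finset.mem_univ, true_and] at hx ⊢
    simp only [Equiv.Perm.mul_apply] at hx ⊢
    rw [Equiv.swap_apply_def] at hx
    split_ifs at hx <;> grind
  · left
    refine Finset.card_le_card fun x hx => ?_
    simp only [Finset.mem_filter, Finset.mem_univ, true_and] at hx ⊢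
    simp only [Equiv.Perm.mul_apply] at hx ⊢
    rw [Equiv.swap_apply_def] at hx
    split_ifs at hx <;> grind

lemma bruhatLE_cons {n : ℕ} {u w : Equiv.Perm (Fin n)} {i j : Fin n} (hij : i ≠ j)
    (hlt : invCount u < invCount (u * Equiv.swap i j)) (h : BruhatLE (u * Equiv.swap i j) w) :
    BruhatLE u w := by
  obtain ⟨ts, h1, h2, h3⟩ := h
  refine ⟨Equiv.swap i j :: ts, ?_, by simpa using h2, ?_⟩
  · intro t ht
    rcases List.mem_cons.1 ht with rfl | ht
    · exact ⟨i, j, hij, rfl⟩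
    · exact h1 t ht
  · rintro (_ | k) hk
    · simpa using hlt
    · simpa using h3 k (by simpa using hk)

lemma rk_le_of_bruhatLE {n : ℕ} {u w : Equiv.Perm (Fin n)} (h : BruhatLE u w) (p q : ℕ) :
    rk u p q ≤ rk w p q := by
  obtain ⟨ts, h1, h2, h3⟩ := h
  induction ts generalizing u with
  | nil => simp at h2; rw [h2]
  | cons t ts ih =>
    have h0 := h3 0 (by simp)
    simp only [List.take_zero, List.foldl_nil, zero_add, List.take_succ_cons,
      List.foldl_cons] at h0
    refine le_trans ?_ (ih (u := u * t) (fun s hs => h1 s (by simp [hs])) (by simpa using h2) ?_)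
    · obtain ⟨i, j, hij, rfl⟩ := h1 t (by simp)
      wlog hlt : i < j generalizing i j
      · rw [Equiv.swap_comm] at h0 h1 h2 h3 ⊢
        exact this j i hij.symm h1 h2 h3 h0 (lt_of_le_of_ne (not_lt.1 hlt) hij.symm)
      have hu : u i < u j := by
        by_contra hc
        have hc' : u j < u i := lt_of_le_of_ne (not_lt.1 hc) (fun e => hij (u.injective e).symm)
        have := invCount_lt_mul_swap (u * Equiv.swap i j) hlt (by simpa using hc')
        rw [mul_assoc, Equiv.swap_mul_self, mul_one] at this
        omega
      exact rk_le_mul_swap u hlt hu p q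
    · intro k hk
      simpa using h3 (k + 1) (by simpa using hk)

lemma lt_of_first_diff {n : ℕ} {u w : Equiv.Perm (Fin n)} (h : ∀ p q, rk u p q ≤ rk w p q)
    {i : Fin n} (hi : u i ≠ w i) (hmin : ∀ x, x < i → u x = w x) : u i < w i := by
  by_contra hc
  have hc' : w i < u i := lt_of_le_of_ne (not_lt.1 hc) hi.symm
  have := h i (w i)
  refine absurd this (not_le.2 ?_)
  unfold rk
  apply Finset.card_lt_card
  rw [Finset.ssubset_iff_of_subset]
  · refine ⟨i, ?_, ?_⟩
    · simpa using hc'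
    · simp
  · intro x hx
    simp only [Finset.mem_filter, Finset.mem_univ, true_and] at hx ⊢
    refine ⟨hx.1, ?_⟩
    rcases lt_or_eq_of_le (show x ≤ i from hx.1) with hlt | rfl
    · rw [hmin x hlt]; exact hx.2
    · simp at hx

lemma exists_first_diff {n : ℕ} {u w : Equiv.Perm (Fin n)} (h : u ≠ w) :
    ∃ i, u i ≠ w i ∧ ∀ x, x < i → u x = w x := by
  have hne : ∃ i, u i ≠ w i := by
    by_contra hc
    push Not at hc
    exact h (Equiv.ext hc)
  obtain ⟨i, hi, hm⟩ := WellFounded.has_min (wellFounded_lt (α := Fin n)) {i | u i ≠ w i} hne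
  exact ⟨i, hi, fun x hx => by_contra fun hc => hm x hc hx⟩

lemma eq_of_rk_eq {n : ℕ} {u w : Equiv.Perm (Fin n)} (h : ∀ p q, rk u p q ≤ rk w p q)
    (h' : ∀ p q, rk w p q ≤ rk u p q) : u = w := by
  by_contra hne
  obtain ⟨i, hi, hm⟩ := exists_first_diff hne
  exact lt_asymm (lt_of_first_diff h hi hm)
    (lt_of_first_diff h' hi.symm fun x hx => (hm x hx).symm)

/-- Inductive step of the Ehresmann criterion. With `i` the first place where `u` and `w` differ
and `j > i` the first place with `u i < u j ≤ w i`, swapping `i` and `j` stays below `w`. -/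
lemma exists_swap_of_rk_le {n : ℕ} {u w : Equiv.Perm (Fin n)} (h : ∀ p q, rk u p q ≤ rk w p q)
    (hne : u ≠ w) : ∃ i j, i < j ∧ u i < u j ∧
      ∀ p q, rk (u * Equiv.swap i j) p q ≤ rk w p q := by
  classical
  obtain ⟨i, hi, hm⟩ := exists_first_diff hne
  have hlt := lt_of_first_diff h hi hm
  have hex : ∃ j, i < j ∧ u i < u j ∧ u j ≤ w i := by
    refine ⟨u.symm (w i), ?_, by simpa using hlt, by simp⟩
    rcases lt_trichotomy i (u.symm (w i)) with h1 | h1 | h1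
    · exact h1
    · exact absurd (by rw [h1, Equiv.apply_symm_apply, ← h1]) hi
    · have := hm _ h1
      rw [Equiv.apply_symm_apply] at this
      exact absurd (w.injective this) h1.ne'
  obtain ⟨j, ⟨hij, huj, hjw⟩, hjm⟩ := WellFounded.has_min (wellFounded_lt (α := Fin n))
    {j | i < j ∧ u i < u j ∧ u j ≤ w i} hex
  refine ⟨i, j, hij, huj, fun p q => ?_⟩
  rcases rk_mul_swap_le u hij p q with h1 | ⟨h1, h2, h3, h4, h5⟩
  · exact h1.trans (h p q)
  -- Split both counts at the height `w i`: above it the hypothesis applies, and between `q`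
  -- and `w i` only the common prefix of `u` and `w` matters, plus the point `i` for `w`.
  have hu : rk u p q ≤ rk u p (w i) +
      (Finset.univ.filter fun x : Fin n => x < i ∧ q < (w x : ℕ) ∧ w x ≤ w i).card := by
    unfold rk
    refine le_trans (Finset.card_le_card fun x hx => ?_) (Finset.card_union_le _ _)
    simp only [Finset.mem_union, Finset.mem_filter, Finset.mem_univ, true_and] at hx ⊢
    have h6 := hjm x
    have h7 := hm x
    simp only [Set.mem_ofPred_eq] at h6
    have h8 : x = i → u x = u i := fun e => by rw [e]
    have h9 : x ≠ i → u x ≠ u i := fun e e' => e (u.injective e')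
    grind
  have hw : rk w p (w i) +
      (Finset.univ.filter fun x : Fin n => x < i ∧ q < (w x : ℕ) ∧ w x ≤ w i).card + 1 ≤
      rk w p q := by
    unfold rk
    rw [add_assoc, ← Finset.card_insert_of_notMem (a := i) (by simp),
      ← Finset.card_union_of_disjoint]
    · refine Finset.card_le_card fun x hx => ?_
      simp only [Finset.mem_union, Finset.mem_insert, Finset.mem_filter, Finset.mem_univ,
        true_and] at hx ⊢
      have h8 : x = i → w x = w i := fun e => by rw [e]
      grind
    · rw [Finset.disjoint_left]
      intro x hx
      simp only [Finset.mem_insert, Finset.mem_filter, Finset.mem_univ, true_and] at hx ⊢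
      grind
  have := h p (w i)
  omega

lemma bruhatLE_of_rk_le {n : ℕ} {u w : Equiv.Perm (Fin n)} (h : ∀ p q, rk u p q ≤ rk w p q) :
    BruhatLE u w := by
  have hb : ∀ v : Equiv.Perm (Fin n), invCount v ≤ Fintype.card (Fin n × Fin n) := fun v =>
    Finset.card_le_univ _
  induction hN : Fintype.card (Fin n × Fin n) - invCount u using Nat.strong_induction_on
    generalizing u with
  | _ N ih =>
    by_cases hne : u = w
    · subst hne
      exact ⟨[], by simp, by simp, by simp⟩
    obtain ⟨i, j, hij, huj, hle⟩ := exists_swap_of_rk_le h hne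
    have hlt := invCount_lt_mul_swap u hij huj
    have := hb (u * Equiv.swap i j)
    exact bruhatLE_cons hij.ne hlt (ih _ (by omega) hle rfl)

/-- Ehresmann's criterion. -/
lemma bruhatLE_iff {n : ℕ} {u w : Equiv.Perm (Fin n)} :
    BruhatLE u w ↔ ∀ p q, rk u p q ≤ rk w p q :=
  ⟨fun h => rk_le_of_bruhatLE h, bruhatLE_of_rk_le⟩

/-! ### Arcs over an edge -/

/-- An arc of `u` starting at or before `p` ends beyond `q`. -/
def Cov {n : ℕ} (u : Equiv.Perm (Fin n)) (p q : ℕ) : Prop :=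
  ∃ i : Fin n, (i : ℕ) ≤ p ∧ q < (u i : ℕ)

/-- Two arcs of `u` cross the edge between `p` and `p + 1`. -/
def Dbl {n : ℕ} (u : Equiv.Perm (Fin n)) (p : ℕ) : Prop :=
  ∃ i j : Fin n, i < j ∧ (j : ℕ) ≤ p ∧ p < (u i : ℕ) ∧ p < (u j : ℕ)

lemma one_le_rk_iff {n : ℕ} {u : Equiv.Perm (Fin n)} {p q : ℕ} : 1 ≤ rk u p q ↔ Cov u p q := by
  unfold rk Cov
  rw [Nat.one_le_iff_ne_zero, Finset.card_ne_zero]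
  simp [Finset.Nonempty]

lemma two_le_rk_iff {n : ℕ} {u : Equiv.Perm (Fin n)} {p : ℕ} : 2 ≤ rk u p p ↔ Dbl u p := by
  unfold rk Dbl
  rw [← Nat.lt_iff_add_one_le, Finset.one_lt_card]
  simp only [Finset.mem_filter, Finset.mem_univ, true_and]
  constructor
  · rintro ⟨a, ha, b, hb, hab⟩
    rcases lt_or_gt_of_ne hab with h | h
    · exact ⟨a, b, h, hb.1, ha.2, hb.2⟩
    · exact ⟨b, a, h, ha.1, hb.2, ha.2⟩
  · rintro ⟨a, b, h, h1, h2, h3⟩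
    have : (a : ℕ) < b := h
    exact ⟨a, ⟨by omega, h2⟩, b, ⟨h1, h3⟩, h.ne⟩

lemma IsInvolution.apply_apply {n : ℕ} {w : Equiv.Perm (Fin n)} (hw : IsInvolution w)
    (i : Fin n) : w (w i) = i := by
  have := congrArg (fun v : Equiv.Perm (Fin n) => v i) hw
  simpa using this

/-- The absence of a long-crossing pair, as a bound: the form in which it is used. -/
lemma le_of_not_longCrossing {n : ℕ} {w : Equiv.Perm (Fin n)} (h : ¬ HasLongCrossing w)
    {i j : Fin n} (hij : i < j) (hj : j < w j) : (w i : ℕ) ≤ j + 1 := by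
  by_contra hc
  exact h ⟨i, j, hij, hj, by omega⟩

/-- At a doubly covered edge `p, p + 1` one arc ends at `p + 1` and the other starts at `p`. -/
lemma Dbl.shape {n : ℕ} {w : Equiv.Perm (Fin n)} (h : ¬ HasLongCrossing w) {p : ℕ}
    (hd : Dbl w p) :
    ∃ i j : Fin n, i < j ∧ (j : ℕ) = p ∧ (w i : ℕ) = p + 1 ∧ p + 1 < (w j : ℕ) := by
  obtain ⟨i, j, hij, hj, h1, h2⟩ := hd
  have := le_of_not_longCrossing h hij (Fin.lt_def.2 (by omega))
  have hne : (w i : ℕ) ≠ w j := fun e => hij.ne (w.injective (Fin.ext e))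
  exact ⟨i, j, hij, by omega, by omega, by omega⟩

lemma rk_le_one {n : ℕ} {w : Equiv.Perm (Fin n)} (h : ¬ HasLongCrossing w) {p q : ℕ}
    (hpq : p < q) : rk w p q ≤ 1 := by
  by_contra hc
  unfold rk at hc
  rw [not_le, Finset.one_lt_card] at hc
  simp only [Finset.mem_filter, Finset.mem_univ, true_and] at hc
  obtain ⟨a, ha, b, hb, hab⟩ := hc
  have h1 := @le_of_not_longCrossing n w h a b
  have h2 := @le_of_not_longCrossing n w h b a
  grind

lemma rk_le_two {n : ℕ} {w : Equiv.Perm (Fin n)} (h : ¬ HasLongCrossing w) {p : ℕ} :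
    rk w p p ≤ 2 := by
  by_contra hc
  unfold rk at hc
  rw [not_le, Finset.two_lt_card] at hc
  simp only [Finset.mem_filter, Finset.mem_univ, true_and] at hc
  obtain ⟨a, ha, b, hb, c, hc, hab, hac, hbc⟩ := hc
  have h1 := @le_of_not_longCrossing n w h a b
  have h2 := @le_of_not_longCrossing n w h b a
  have h3 := @le_of_not_longCrossing n w h a c
  have h4 := @le_of_not_longCrossing n w h c a
  have h5 := @le_of_not_longCrossing n w h c b
  have h6 := @le_of_not_longCrossing n w h b c
  grind

/-- The corner counts above the diagonal determine those below it, by symmetry. -/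
lemma rk_le_of_upper {n : ℕ} {u w : Equiv.Perm (Fin n)} (hu : IsInvolution u)
    (hw : IsInvolution w) (h : ∀ p q, p ≤ q → rk u p q ≤ rk w p q) (p q : ℕ) :
    rk u p q ≤ rk w p q := by
  classical
  rcases le_total p q with hpq | hpq
  · exact h p q hpq
  have key : ∀ v : Equiv.Perm (Fin n), IsInvolution v →
      rk v p q + (Finset.univ.filter fun i : Fin n => (i : ℕ) ≤ q).card =
      rk v q p + (Finset.univ.filter fun i : Fin n => (i : ℕ) ≤ p).card := by
    intro v hv
    have h1 : (Finset.univ.filter fun i : Fin n => (i : ℕ) ≤ p).card =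
        rk v p q + (Finset.univ.filter fun i : Fin n => (i : ℕ) ≤ p ∧ (v i : ℕ) ≤ q).card := by
      unfold rk
      rw [← Finset.card_union_of_disjoint]
      · congr 1; ext i
        simp only [Finset.mem_union, Finset.mem_filter, Finset.mem_univ, true_and]
        omega
      · rw [Finset.disjoint_left]
        intro x hx
        simp only [Finset.mem_filter, Finset.mem_univ, true_and] at hx ⊢
        omega
    have h2 : (Finset.univ.filter fun i : Fin n => (i : ℕ) ≤ q).card =
        rk v q p + (Finset.univ.filter fun i : Fin n => (i : ℕ) ≤ q ∧ (v i : ℕ) ≤ p).card := by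
      unfold rk
      rw [← Finset.card_union_of_disjoint]
      · congr 1; ext i
        simp only [Finset.mem_union, Finset.mem_filter, Finset.mem_univ, true_and]
        omega
      · rw [Finset.disjoint_left]
        intro x hx
        simp only [Finset.mem_filter, Finset.mem_univ, true_and] at hx ⊢
        omega
    have h3 : (Finset.univ.filter fun i : Fin n => (i : ℕ) ≤ p ∧ (v i : ℕ) ≤ q).card =
        (Finset.univ.filter fun i : Fin n => (i : ℕ) ≤ q ∧ (v i : ℕ) ≤ p).card := by
      refine Finset.card_bij' (fun i _ => v i) (fun i _ => v i) ?_ ?_ ?_ ?_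
      · intro i hi
        simp only [Finset.mem_filter, Finset.mem_univ, true_and] at hi ⊢
        rw [hv.apply_apply]; exact hi.symm
      · intro i hi
        simp only [Finset.mem_filter, Finset.mem_univ, true_and] at hi ⊢
        rw [hv.apply_apply]; exact hi.symm
      · exact fun i _ => hv.apply_apply i
      · exact fun i _ => hv.apply_apply i
    omega
  have := key u hu
  have := key w hw
  have := h q p hpq
  omega

/-! ### The ideal below an involution without long-crossing pairs -/

lemma Cov.mono_rk {n : ℕ} {u w : Equiv.Perm (Fin n)} (h : ∀ p q, rk u p q ≤ rk w p q) {p q : ℕ}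
    (hc : Cov u p q) : Cov w p q :=
  one_le_rk_iff.1 ((one_le_rk_iff.2 hc).trans (h p q))

lemma Dbl.mono_rk {n : ℕ} {u w : Equiv.Perm (Fin n)} (h : ∀ p q, rk u p q ≤ rk w p q) {p : ℕ}
    (hc : Dbl u p) : Dbl w p :=
  two_le_rk_iff.1 ((two_le_rk_iff.2 hc).trans (h p p))

/-- No arc spans a doubly covered edge together with both of its neighbours. -/
lemma not_cov_of_dbl {n : ℕ} {w : Equiv.Perm (Fin n)} (h : ¬ HasLongCrossing w) {m : ℕ}
    (hd : Dbl w (m + 1)) : ¬ Cov w m (m + 2) := by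
  rintro ⟨a, ha, ha'⟩
  obtain ⟨i, j, hij, hj, h1, h2⟩ := hd.shape h
  have := le_of_not_longCrossing h (i := a) (j := j) (by grind) (by grind)
  omega

lemma not_dbl_succ {n : ℕ} {w : Equiv.Perm (Fin n)} (hw : IsInvolution w)
    (h : ¬ HasLongCrossing w) {m : ℕ} (hd : Dbl w m) : ¬ Dbl w (m + 1) := by
  intro hd'
  obtain ⟨i, j, hij, hj, h1, h2⟩ := hd.shape h
  obtain ⟨i', j', hij', hj', h1', h2'⟩ := hd'.shape h
  have : w i = j' := Fin.ext (by omega)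
  have := hw.apply_apply i
  grind

lemma not_longCrossing_of_le {n : ℕ} {u w : Equiv.Perm (Fin n)} (h : ¬ HasLongCrossing w)
    (hle : ∀ p q, rk u p q ≤ rk w p q) : ¬ HasLongCrossing u := by
  rintro ⟨i, j, hij, hj, hi⟩
  obtain ⟨m, hm⟩ : ∃ m, (j : ℕ) = m + 1 := ⟨j - 1, by omega⟩
  refine not_cov_of_dbl h (m := m) (Dbl.mono_rk hle ⟨i, j, hij, by omega, by omega, by omega⟩)
    (Cov.mono_rk hle ⟨i, by omega, by omega⟩)

/-- If an arc of `w` spans the edges `p, …, q` and `b ≤ w` covers each of these edges, then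
already a single arc of `b` spans all of them: where one arc of `b` hands over to the next,
`b` and hence `w` is doubly covered, and that cannot happen inside an arc of `w`. -/
lemma cov_of_cov {n : ℕ} {b w : Equiv.Perm (Fin n)} (hb : IsInvolution b)
    (h : ¬ HasLongCrossing w) (hle : ∀ p q, rk b p q ≤ rk w p q) {p q : ℕ} (hpq : p ≤ q)
    (hc : Cov w p q) (hs : ∀ m, p ≤ m → m ≤ q → Cov b m m) : Cov b p q := by
  induction q, hpq using Nat.le_induction with
  | base => exact hs p le_rfl le_rfl
  | succ q hpq ih =>
    obtain ⟨a, ha, ha'⟩ := hc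
    obtain ⟨c, h1, h2⟩ := ih ⟨a, ha, by omega⟩ (fun m h1 h2 => hs m h1 (by omega))
    by_cases h3 : q + 1 < (b c : ℕ)
    · exact ⟨c, h1, h3⟩
    obtain ⟨c', h4, h5⟩ := hs (q + 1) (by omega) le_rfl
    have h6 := hb.apply_apply c
    have h7 : (c' : ℕ) ≠ q + 1 := by
      intro e
      have : c' = b c := Fin.ext (by omega)
      rw [this, h6] at h5
      omega
    by_cases h8 : (c' : ℕ) ≤ p
    · exact ⟨c', h8, h5⟩
    have hd : Dbl w q := Dbl.mono_rk hle ⟨c, c', by grind, by omega, h2, by omega⟩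
    obtain ⟨i, j, hij, hj, h9, h10⟩ := hd.shape h
    have := le_of_not_longCrossing h (i := a) (j := j) (by grind) (by grind)
    omega

/-- If `b ≤ w` covers an edge doubly covered by `w` and both of its neighbours, then `b` covers that
edge doubly: the arcs over the two neighbours must both pass over it, and no arc passes over all
three edges. -/
lemma dbl_of_dbl {n : ℕ} {b w : Equiv.Perm (Fin n)} (hb : IsInvolution b) (hw : IsInvolution w)
    (h : ¬ HasLongCrossing w) (hle : ∀ p q, rk b p q ≤ rk w p q) {m : ℕ} (hd : Dbl w (m + 1))
    (h0 : Cov b m m) (h1 : Cov b (m + 1) (m + 1)) (h2 : Cov b (m + 2) (m + 2)) :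
    Dbl b (m + 1) := by
  obtain ⟨x, hx, hx'⟩ := h0
  obtain ⟨y, hy, hy'⟩ := h1
  obtain ⟨z, hz, hz'⟩ := h2
  have n0 : ¬ Dbl b m := fun e => not_dbl_succ hw h (Dbl.mono_rk hle e) hd
  have n2 : ¬ Dbl b (m + 2) := fun e => not_dbl_succ hw h hd (Dbl.mono_rk hle e)
  have pair : ∀ k (s t : Fin n), s ≠ t → (s : ℕ) ≤ k → (t : ℕ) ≤ k → k < (b s : ℕ) →
      k < (b t : ℕ) → Dbl b k := by
    intro k s t hst a1 a2 a3 a4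
    rcases lt_or_gt_of_ne hst with hlt | hlt
    · exact ⟨s, t, hlt, a2, a3, a4⟩
    · exact ⟨t, s, hlt, a1, a4, a3⟩
  have bx := hb.apply_apply x
  have bz := hb.apply_apply z
  have b_y := hb.apply_apply y
  have hx2 : m + 1 < (b x : ℕ) := by
    by_contra hc
    have e : (b x : ℕ) = m + 1 := by omega
    have : y ≠ b x := by
      rintro rfl
      rw [bx] at hy'; omega
    have hy2 : (y : ℕ) ≠ m + 1 := fun e' => this (Fin.ext (by omega))
    exact n0 (pair m x y (by rintro rfl; omega) hx (by omega) hx' (by omega))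
  have hz2 : (z : ℕ) ≤ m + 1 := by
    by_contra hc
    have e : (z : ℕ) = m + 2 := by omega
    have hy2 : (b y : ℕ) ≠ m + 2 := by
      intro e'
      have : b y = z := Fin.ext (by omega)
      rw [← this, b_y] at hz'
      omega
    exact n2 (pair (m + 2) y z (by rintro rfl; omega) (by omega) hz (by omega) hz')
  refine pair (m + 1) x z ?_ (by omega) hz2 hx2 (by omega)
  rintro rfl
  have hc : Cov b m (m + 2) := ⟨x, hx, hz'⟩
  exact not_cov_of_dbl h hd (hc.mono_rk hle)

/-- On the ideal below `w`, inclusion of supports implies the Bruhat order. -/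
lemma rk_le_of_support {n : ℕ} {a b w : Equiv.Perm (Fin n)} (ha : IsInvolution a)
    (hb : IsInvolution b) (hw : IsInvolution w) (h : ¬ HasLongCrossing w)
    (hla : ∀ p q, rk a p q ≤ rk w p q) (hlb : ∀ p q, rk b p q ≤ rk w p q)
    (hs : ∀ m, Cov a m m → Cov b m m) : ∀ p q, rk a p q ≤ rk b p q := by
  refine rk_le_of_upper ha hb fun p q hpq => ?_
  have h1 : 1 ≤ rk a p q → 1 ≤ rk b p q := by
    rw [one_le_rk_iff, one_le_rk_iff]
    intro hc
    refine cov_of_cov hb h hlb hpq (hc.mono_rk hla) fun m hm hm' => hs m ?_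
    obtain ⟨i, hi, hi'⟩ := hc
    exact ⟨i, by omega, by omega⟩
  have h2 : p = q → 2 ≤ rk a p q → 2 ≤ rk b p q := by
    rintro rfl
    rw [two_le_rk_iff, two_le_rk_iff]
    intro hd
    obtain ⟨i, j, hij, hj, h3, h4⟩ := hd.shape (not_longCrossing_of_le h hla)
    have : (i : ℕ) < j := hij
    obtain ⟨m, rfl⟩ : ∃ m, p = m + 1 := ⟨p - 1, by omega⟩
    exact dbl_of_dbl hb hw h hlb (hd.mono_rk hla) (hs _ ⟨i, by omega, by omega⟩)
      (hs _ ⟨i, by omega, by omega⟩) (hs _ ⟨j, by omega, by omega⟩)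
  rcases eq_or_lt_of_le hpq with e | e
  · have : rk a p q ≤ 2 := by
      rw [← e]; exact (hla p p).trans (rk_le_two h)
    have := h2 e
    omega
  · have := (hla p q).trans (rk_le_one h e)
    omega

/-! ### Deleting one edge from the support -/

/-- A sufficient condition for `u ≤ w`: each arc of `u` is no longer than the arc of `w` with the
same start, except that an arc starting at `e` may instead be compared with the arc of `w`
starting at some earlier `z`, provided `u` has no arc from `z` beyond `e`. -/
lemma rk_le_of_arcs {n : ℕ} {u w : Equiv.Perm (Fin n)} {e z : Fin n} (hze : z < e)
    (hz : u z ≤ e) (h : ∀ i, i < u i → u i ≤ w i ∨ (i = e ∧ u i ≤ w z)) {p q : ℕ}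
    (hpq : p ≤ q) : rk u p q ≤ rk w p q := by
  classical
  unfold rk
  refine Finset.card_le_card_of_injOn (fun i => if q < (w i : ℕ) then i else z) ?_ ?_
  · intro i hi
    simp only [Finset.coe_filter, Finset.mem_univ, true_and, Set.mem_ofPred_eq] at hi ⊢
    have := h i
    split_ifs <;> grind
  · intro i hi j hj hij
    simp only [Finset.coe_filter, Finset.mem_univ, true_and, Set.mem_ofPred_eq] at hi hj hij
    have := h i
    have := h j
    split_ifs at hij <;> grind

/-- Two arcs over a doubly covered edge are uncrossed by conjugating with that edge. -/
lemma exists_delete_dbl {n : ℕ} {w : Equiv.Perm (Fin n)} (hw : IsInvolution w)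
    (h : ¬ HasLongCrossing w) {k : ℕ} (hk : Dbl w k) :
    ∃ u : Equiv.Perm (Fin n), IsInvolution u ∧ (∀ p q, p ≤ q → rk u p q ≤ rk w p q) ∧
      ∀ m, Cov u m m ↔ Cov w m m ∧ m ≠ k := by
  classical
  obtain ⟨c, K, hcK, rfl, hc, hK⟩ := hk.shape h
  have ww := hw.apply_apply
  obtain ⟨K', hK'⟩ : ∃ K', w c = K' := ⟨_, rfl⟩
  obtain ⟨d, hd⟩ : ∃ d, w K = d := ⟨_, rfl⟩
  rw [hK'] at hc
  rw [hd] at hK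
  have wK' : w K' = c := by rw [← hK', ww]
  have wd : w d = K := by rw [← hd, ww]
  have o1 : K < K' := by grind
  have o2 : K' < d := by grind
  let g : Fin n → Fin n := fun i =>
    if i = c then K else if i = K then c else if i = K' then d else if i = d then K' else w i
  have g1 : g c = K := by simp [g]
  have g2 : g K = c := by grind
  have g3 : g K' = d := by grind
  have g4 : g d = K' := by grind
  have g5 : ∀ i, i ≠ c → i ≠ K → i ≠ K' → i ≠ d → g i = w i := by grind
  have gg : Function.Involutive g := by
    intro i
    have := ww i
    have := g5 i
    have := g5 (w i)
    by_cases i = c <;> by_cases i = K <;> by_cases i = K' <;> by_cases i = d <;> grind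
  clear_value g
  refine ⟨gg.toPerm, Equiv.ext gg, fun p q => rk_le_of_arcs o1 ?_ ?_, fun m => ?_⟩
  · change g K ≤ K'
    grind
  · intro i
    change i < g i → g i ≤ w i ∨ _ ∧ g i ≤ w K
    have := g5 i
    by_cases i = c <;> by_cases i = K <;> by_cases i = K' <;> by_cases i = d <;> grind
  · change (∃ i : Fin n, (i : ℕ) ≤ m ∧ m < (g i : ℕ)) ↔ _
    constructor
    · rintro ⟨i, hi, hi'⟩
      by_cases e1 : i = c
      · exact ⟨⟨c, by grind, by grind⟩, by grind⟩
      by_cases e2 : i = K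
      · exact ⟨⟨c, by grind, by grind⟩, by grind⟩
      by_cases e3 : i = K'
      · exact ⟨⟨K, by grind, by grind⟩, by grind⟩
      by_cases e4 : i = d
      · exact ⟨⟨K, by grind, by grind⟩, by grind⟩
      rw [g5 i e1 e2 e3 e4] at hi'
      refine ⟨⟨i, hi, hi'⟩, ?_⟩
      rintro rfl
      have h1 := @le_of_not_longCrossing n w h i K
      have : w i ≠ K' := fun e => e1 (w.injective (e.trans hK'.symm))
      grind
    · rintro ⟨⟨i, hi, hi'⟩, hm⟩
      by_cases e1 : i = c
      · exact ⟨c, by grind, by grind⟩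
      by_cases e2 : i = K
      · exact ⟨K', by grind, by grind⟩
      by_cases e3 : i = K'
      · grind
      by_cases e4 : i = d
      · grind
      exact ⟨i, hi, by rwa [g5 i e1 e2 e3 e4]⟩

/-- A single arc `c, d` over the edge `k, k + 1` is cut into an arc from `c` to `k` and an arc
from `k + 1` to `d`, except that on a side where the endpoint is already taken by another arc
no new arc is needed. -/
lemma exists_delete_single {n : ℕ} {w : Equiv.Perm (Fin n)} (hw : IsInvolution w)
    (h : ¬ HasLongCrossing w) {k : ℕ} (hk : Cov w k k) (hnd : ¬ Dbl w k) :
    ∃ u : Equiv.Perm (Fin n), IsInvolution u ∧ (∀ p q, p ≤ q → rk u p q ≤ rk w p q) ∧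
      ∀ m, Cov u m m ↔ Cov w m m ∧ m ≠ k := by
  classical
  obtain ⟨c, hc, hc'⟩ := hk
  have ww := hw.apply_apply
  obtain ⟨d, hd⟩ : ∃ d, w c = d := ⟨_, rfl⟩
  rw [hd] at hc'
  have wd : w d = c := by rw [← hd, ww]
  obtain ⟨K, hK⟩ : ∃ K : Fin n, (K : ℕ) = k := ⟨⟨k, by omega⟩, rfl⟩
  obtain ⟨K', hK'⟩ : ∃ K' : Fin n, (K' : ℕ) = k + 1 := ⟨⟨k + 1, by omega⟩, rfl⟩
  have uniq : ∀ i : Fin n, (i : ℕ) ≤ k → k < (w i : ℕ) → i = c := by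
    intro i hi hi'
    by_contra hne
    rcases lt_or_gt_of_ne hne with hlt | hlt
    · exact hnd ⟨i, c, hlt, hc, hi', by omega⟩
    · exact hnd ⟨c, i, hlt, hi, by omega, by omega⟩
  -- `A` and `B` are the new partners of `c` and `d`.
  obtain ⟨A, hA⟩ : ∃ A, A = if w K < K then c else K := ⟨_, rfl⟩
  obtain ⟨B, hB⟩ : ∃ B, B = if K' < w K' then d else K' := ⟨_, rfl⟩
  have A1 : c ≤ A ∧ A ≤ K := by split_ifs at hA <;> grind
  have B1 : K' ≤ B ∧ B ≤ d := by split_ifs at hB <;> grind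
  have A2 : A = c ∨ w A = A := by
    split_ifs at hA with h1
    · exact Or.inl hA
    · have := uniq K
      grind
  have B2 : B = d ∨ w B = B := by
    split_ifs at hB with h1
    · exact Or.inl hB
    · have := uniq (w K')
      have := ww K'
      grind
  let g : Fin n → Fin n := fun i =>
    if i = c then A else if i = A then c else if i = d then B else if i = B then d else w i
  have g1 : g c = A := by simp [g]
  have g2 : g A = c := by grind
  have g3 : g d = B := by grind
  have g4 : g B = d := by grind
  have g5 : ∀ i, i ≠ c → i ≠ A → i ≠ d → i ≠ B → g i = w i := by grind
  have gg : Function.Involutive g := by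
    intro i
    have := ww i
    have := g5 i
    have := g5 (w i)
    by_cases i = c <;> by_cases i = A <;> by_cases i = d <;> by_cases i = B <;> grind
  clear_value g
  refine ⟨gg.toPerm, Equiv.ext gg,
    fun p q => rk_le_of_arcs (e := K') (z := c) (by grind) ?_ ?_, fun m => ?_⟩
  · change g c ≤ K'
    grind
  · intro i
    change i < g i → g i ≤ w i ∨ _ ∧ g i ≤ w c
    have := g5 i
    by_cases i = c <;> by_cases i = A <;> by_cases i = d <;> by_cases i = B <;> grind
  · change (∃ i : Fin n, (i : ℕ) ≤ m ∧ m < (g i : ℕ)) ↔ _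
    constructor
    · rintro ⟨i, hi, hi'⟩
      by_cases e1 : i = c
      · exact ⟨⟨c, by grind, by grind⟩, by grind⟩
      by_cases e2 : i = A
      · grind
      by_cases e3 : i = d
      · grind
      by_cases e4 : i = B
      · exact ⟨⟨c, by grind, by grind⟩, by grind⟩
      rw [g5 i e1 e2 e3 e4] at hi'
      refine ⟨⟨i, hi, hi'⟩, ?_⟩
      rintro rfl
      exact e1 (uniq i hi hi')
    · rintro ⟨⟨i, hi, hi'⟩, hm⟩
      by_cases e1 : i = c
      · subst e1
        rcases lt_or_gt_of_ne hm with hlt | hlt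
        · by_cases h1 : w K < K
          · -- The arc from `w K` to `K` crosses the arc from `i`, which starts at `K - 1`.
            have h2 := @le_of_not_longCrossing n w h (w K) i
            have h3 := @le_of_not_longCrossing n w h i (w K)
            have h4 := ww K
            refine ⟨w K, ?_, ?_⟩
            · grind
            · rw [g5 (w K)] <;> grind
          · exact ⟨i, hi, by grind⟩
        · by_cases h1 : K' < w K'
          · have h2 := @le_of_not_longCrossing n w h i K'
            refine ⟨K', by grind, ?_⟩
            rw [g5 K'] <;> grind
          · exact ⟨K', by grind, by grind⟩
      by_cases e2 : i = A
      · grind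
      by_cases e3 : i = d
      · grind
      by_cases e4 : i = B
      · grind
      exact ⟨i, hi, by rwa [g5 i e1 e2 e3 e4]⟩

/-- Any set `T` of edges can be deleted from the support of `w`. -/
lemma exists_of_subset {n : ℕ} {w : Equiv.Perm (Fin n)} (hw : IsInvolution w)
    (h : ¬ HasLongCrossing w) (T : Finset ℕ) :
    ∃ u : Equiv.Perm (Fin n), IsInvolution u ∧ (∀ p q, rk u p q ≤ rk w p q) ∧
      ∀ m, Cov u m m ↔ Cov w m m ∧ m ∉ T := by
  classical
  induction T using Finset.induction_on with
  | empty => exact ⟨w, hw, fun _ _ => le_rfl, by simp⟩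
  | insert k T _ ih =>
    obtain ⟨u, hu, hle, hs⟩ := ih
    by_cases hk : Cov u k k
    · have hu' := not_longCrossing_of_le h hle
      obtain ⟨v, hv, hvle, hvs⟩ : ∃ v : Equiv.Perm (Fin n), IsInvolution v ∧
          (∀ p q, p ≤ q → rk v p q ≤ rk u p q) ∧ ∀ m, Cov v m m ↔ Cov u m m ∧ m ≠ k := by
        by_cases hd : Dbl u k
        · exact exists_delete_dbl hu hu' hd
        · exact exists_delete_single hu hu' hk hd
      refine ⟨v, hv, fun p q => (rk_le_of_upper hv hu hvle p q).trans (hle p q), fun m => ?_⟩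
      rw [hvs, hs, Finset.mem_insert]
      tauto
    · refine ⟨u, hu, hle, fun m => ?_⟩
      rw [Finset.mem_insert]
      by_cases e : m = k
      · subst e; tauto
      · rw [hs]; tauto

/-- If an involution `w ∈ I(Sₙ)` has no long-crossing pair, then `w` is Boolean. -/
theorem boolean_of_no_long_crossing {n : ℕ} (w : Equiv.Perm (Fin n))
    (hw : IsInvolution w) (h : ¬ HasLongCrossing w) :
    IsBooleanInvolution w := by
  classical
  let s : Finset ℕ := (Finset.range n).filter fun m => Cov w m m
  have hs : ∀ m, m ∈ s ↔ Cov w m m := by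
    intro m
    simp only [s, Finset.mem_filter, Finset.mem_range, and_iff_right_iff_imp]
    rintro ⟨i, -, hi⟩
    omega
  let e : Fin s.card ≃ s := s.equivFin.symm
  let F : {u : Equiv.Perm (Fin n) // IsInvolution u ∧ BruhatLE u w} → Finset (Fin s.card) :=
    fun u => Finset.univ.filter fun x => Cov u.1 (e x) (e x)
  have hF : ∀ a b, BruhatLE a.1 b.1 ↔ F a ⊆ F b := by
    rintro ⟨a, ha, hla⟩ ⟨b, hb, hlb⟩
    rw [bruhatLE_iff] at hla hlb
    rw [bruhatLE_iff]
    constructor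
    · intro hab x hx
      simp only [F, Finset.mem_filter, Finset.mem_univ, true_and] at hx ⊢
      exact hx.mono_rk hab
    · intro hab
      refine rk_le_of_support ha hb hw h hla hlb fun m hm => ?_
      have hms : m ∈ s := (hs m).2 (hm.mono_rk hla)
      have hx : e.symm ⟨m, hms⟩ ∈ F ⟨a, ha, bruhatLE_iff.2 hla⟩ := by simpa [F] using hm
      simpa [F] using hab hx
  have hinj : Function.Injective F := fun a b hab => Subtype.ext
    (eq_of_rk_eq (bruhatLE_iff.1 ((hF a b).2 hab.subset)) (bruhatLE_iff.1 ((hF b a).2 hab.ge)))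
  have hsurj : Function.Surjective F := by
    intro S
    obtain ⟨u, hu, hle, hc⟩ := exists_of_subset hw h (Sᶜ.image fun x => (e x : ℕ))
    refine ⟨⟨u, hu, bruhatLE_iff.2 hle⟩, ?_⟩
    ext x
    have hx : Cov w (e x) (e x) := (hs _).1 (e x).2
    simp [F, hc, hx]
  exact ⟨s.card, Equiv.ofBijective F ⟨hinj, hsurj⟩, hF⟩
end

section
/- An involution w ∈ I(S_n) has a long-crossing pair if and only if w contains at least one of the patterns 4321, 45312 and 456123. -/
/-- `π` contains the pattern `p` if there are positions `i₁ < ⋯ < iₘ` such that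
`π` restricted to these positions is order-isomorphic to `p`. -/
def ContainsPattern {n m : ℕ} (π : Equiv.Perm (Fin n)) (p : Equiv.Perm (Fin m)) : Prop :=
  ∃ f : Fin m → Fin n, StrictMono f ∧ ∀ j k : Fin m, π (f j) < π (f k) ↔ p j < p k

/-- The pattern 4321 (in one-line notation, 1-indexed). -/
def p4321 : Equiv.Perm (Fin 4) :=
  ⟨![3, 2, 1, 0], ![3, 2, 1, 0], by decide, by decide⟩

/-- The pattern 45312 (in one-line notation, 1-indexed). -/
def p45312 : Equiv.Perm (Fin 5) :=
  ⟨![3, 4, 2, 0, 1], ![3, 4, 2, 0, 1], by decide, by decide⟩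

/-- The pattern 456123 (in one-line notation, 1-indexed). -/
def p456123 : Equiv.Perm (Fin 6) :=
  ⟨![3, 4, 5, 0, 1, 2], ![3, 4, 5, 0, 1, 2], by decide, by decide⟩

/-- Pattern containment tested on consecutive entries only: the positions increase, and so do the
values when listed in the order prescribed by the pattern. -/
lemma ContainsPattern.of_strictMono {n m : ℕ} {w : Equiv.Perm (Fin n)} {p : Equiv.Perm (Fin m)}
    (f : Fin m → Fin n) (hf : StrictMono f) (hv : StrictMono fun k => w (f (p.symm k))) :
    ContainsPattern w p := by
  refine ⟨f, hf, fun j k => ?_⟩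
  simpa using hv.lt_iff_lt (a := p j) (b := p k)

lemma contains_p4321 {n : ℕ} {w : Equiv.Perm (Fin n)} {a b c d : Fin n}
    (h₁ : a < b) (h₂ : b < c) (h₃ : c < d) (v₁ : w d < w c) (v₂ : w c < w b) (v₃ : w b < w a) :
    ContainsPattern w p4321 := by
  refine .of_strictMono ![a, b, c, d] ?_ ?_ <;>
    simp [Fin.strictMono_iff_lt_succ, Fin.forall_fin_succ, p4321, *]

lemma contains_p45312 {n : ℕ} {w : Equiv.Perm (Fin n)} {a b c d e : Fin n}
    (h₁ : a < b) (h₂ : b < c) (h₃ : c < d) (h₄ : d < e)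
    (v₁ : w d < w e) (v₂ : w e < w c) (v₃ : w c < w a) (v₄ : w a < w b) :
    ContainsPattern w p45312 := by
  refine .of_strictMono ![a, b, c, d, e] ?_ ?_ <;>
    simp [Fin.strictMono_iff_lt_succ, Fin.forall_fin_succ, p45312, *]

lemma contains_p456123 {n : ℕ} {w : Equiv.Perm (Fin n)} {a b c d e f : Fin n}
    (h₁ : a < b) (h₂ : b < c) (h₃ : c < d) (h₄ : d < e) (h₅ : e < f)
    (v₁ : w d < w e) (v₂ : w e < w f) (v₃ : w f < w a) (v₄ : w a < w b) (v₅ : w b < w c) :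
    ContainsPattern w p456123 := by
  refine .of_strictMono ![a, b, c, d, e, f] ?_ ?_ <;>
    simp [Fin.strictMono_iff_lt_succ, Fin.forall_fin_succ, p456123, *]

lemma contains_of_hasLongCrossing {n : ℕ} {w : Equiv.Perm (Fin n)} (hi : ∀ x, w (w x) = x)
    (h : HasLongCrossing w) :
    ContainsPattern w p4321 ∨ ContainsPattern w p45312 ∨ ContainsPattern w p456123 := by
  obtain ⟨i, j, hij, hj, hji⟩ := h
  obtain ⟨a, ha⟩ : ∃ a, w i = a := ⟨_, rfl⟩
  obtain ⟨b, hb⟩ : ∃ b, w j = b := ⟨_, rfl⟩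
  have ha' : w a = i := by rw [← ha, hi]
  have hb' : w b = j := by rw [← hb, hi]
  rw [hb] at hj
  rw [ha] at hji
  obtain ⟨c, hc⟩ : ∃ c : Fin n, (c : ℕ) = j + 1 := ⟨⟨j + 1, by omega⟩, rfl⟩
  obtain ⟨d, hd⟩ : ∃ d, w c = d := ⟨_, rfl⟩
  have hd' : w d = c := by rw [← hd, hi]
  have hab : a ≠ b := by rintro rfl; rw [ha'] at hb'; omega
  rcases lt_or_gt_of_ne hab with hab | hab
  swap
  · exact .inl (contains_p4321 (a := i) (b := j) (c := b) (d := a)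
      (by omega) (by omega) (by omega) (by omega) (by omega) (by omega))
  have hdi : d ≠ i := by rintro rfl; rw [ha] at hd'; omega
  have hdj : d ≠ j := by rintro rfl; rw [hb] at hd'; omega
  have hda : d ≠ a := by rintro rfl; rw [ha'] at hd'; omega
  have hdb : d ≠ b := by rintro rfl; rw [hb'] at hd'; omega
  rcases lt_or_gt_of_ne hdi with h1 | h1
  · exact .inr <| .inr <| contains_p456123 (a := d) (b := i) (c := j) (d := c) (e := a) (f := b)
      (by omega) (by omega) (by omega) (by omega) (by omega)
      (by omega) (by omega) (by omega) (by omega) (by omega)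
  rcases lt_or_gt_of_ne hdj with h2 | h2
  · exact .inl <| contains_p4321 (a := i) (b := d) (c := c) (d := a)
      (by omega) (by omega) (by omega) (by omega) (by omega) (by omega)
  by_cases hdc : d = c
  · subst hdc
    exact .inr <| .inl <| contains_p45312 (a := i) (b := j) (c := d) (d := a) (e := b)
      (by omega) (by omega) (by omega) (by omega) (by omega) (by omega) (by omega) (by omega)
  rcases lt_or_gt_of_ne hda with h3 | h3
  · exact .inl <| contains_p4321 (a := i) (b := c) (c := d) (d := a)
      (by omega) (by omega) (by omega) (by omega) (by omega) (by omega)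
  rcases lt_or_gt_of_ne hdb with h4 | h4
  · exact .inl <| contains_p4321 (a := j) (b := c) (c := d) (d := b)
      (by omega) (by omega) (by omega) (by omega) (by omega) (by omega)
  · exact .inr <| .inr <| contains_p456123 (a := i) (b := j) (c := c) (d := a) (e := b) (f := d)
      (by omega) (by omega) (by omega) (by omega) (by omega)
      (by omega) (by omega) (by omega) (by omega) (by omega)

lemma hasLongCrossing_of_p4321 {n : ℕ} {w : Equiv.Perm (Fin n)} (hi : ∀ x, w (w x) = x)
    (h : ContainsPattern w p4321) : HasLongCrossing w := by
  obtain ⟨f, hf, hv⟩ := h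
  have p01 : f 0 < f 1 := hf (by decide)
  have p12 : f 1 < f 2 := hf (by decide)
  have p23 : f 2 < f 3 := hf (by decide)
  have v32 : w (f 3) < w (f 2) := (hv 3 2).2 (by decide)
  have v21 : w (f 2) < w (f 1) := (hv 2 1).2 (by decide)
  have v10 : w (f 1) < w (f 0) := (hv 1 0).2 (by decide)
  by_cases hc : f 1 < w (f 1)
  · exact ⟨f 0, f 1, by omega, by omega, by omega⟩
  · exact ⟨w (f 3), w (f 2), by omega, by rw [hi]; omega, by rw [hi]; omega⟩

lemma hasLongCrossing_of_p45312 {n : ℕ} {w : Equiv.Perm (Fin n)} (hi : ∀ x, w (w x) = x)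
    (h : ContainsPattern w p45312) : HasLongCrossing w := by
  obtain ⟨f, hf, hv⟩ := h
  have p01 : f 0 < f 1 := hf (by decide)
  have p12 : f 1 < f 2 := hf (by decide)
  have p23 : f 2 < f 3 := hf (by decide)
  have p34 : f 3 < f 4 := hf (by decide)
  have v34 : w (f 3) < w (f 4) := (hv 3 4).2 (by decide)
  have v42 : w (f 4) < w (f 2) := (hv 4 2).2 (by decide)
  have v20 : w (f 2) < w (f 0) := (hv 2 0).2 (by decide)
  have v01 : w (f 0) < w (f 1) := (hv 0 1).2 (by decide)
  by_cases hc : f 2 < w (f 2)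
  · exact ⟨f 0, f 1, by omega, by omega, by omega⟩
  · exact ⟨w (f 3), w (f 4), by omega, by rw [hi]; omega, by rw [hi]; omega⟩

lemma hasLongCrossing_of_p456123 {n : ℕ} {w : Equiv.Perm (Fin n)} (hi : ∀ x, w (w x) = x)
    (h : ContainsPattern w p456123) : HasLongCrossing w := by
  obtain ⟨f, hf, hv⟩ := h
  have p01 : f 0 < f 1 := hf (by decide)
  have p12 : f 1 < f 2 := hf (by decide)
  have p23 : f 2 < f 3 := hf (by decide)
  have p34 : f 3 < f 4 := hf (by decide)
  have v34 : w (f 3) < w (f 4) := (hv 3 4).2 (by decide)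
  have v45 : w (f 4) < w (f 5) := (hv 4 5).2 (by decide)
  have v50 : w (f 5) < w (f 0) := (hv 5 0).2 (by decide)
  have v01 : w (f 0) < w (f 1) := (hv 0 1).2 (by decide)
  by_cases hc : f 2 < w (f 0)
  · exact ⟨f 0, f 1, by omega, by omega, by omega⟩
  · exact ⟨w (f 3), w (f 4), by omega, by rw [hi]; omega, by rw [hi]; omega⟩

/-- An involution `w ∈ I(Sₙ)` has a long-crossing pair if and only if `w` contains
at least one of the patterns 4321, 45312 and 456123. -/
theorem long_crossing_iff_contains_pattern {n : ℕ} (w : Equiv.Perm (Fin n))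
    (hw : IsInvolution w) :
    HasLongCrossing w ↔
      ContainsPattern w p4321 ∨ ContainsPattern w p45312 ∨ ContainsPattern w p456123 := by
  have hi : ∀ x, w (w x) = x := fun x => DFunLike.congr_fun hw x
  refine ⟨contains_of_hasLongCrossing hi, ?_⟩
  rintro (h | h | h)
  · exact hasLongCrossing_of_p4321 hi h
  · exact hasLongCrossing_of_p45312 hi h
  · exact hasLongCrossing_of_p456123 hi h
end

section
/- If an involution w ∈ I(S_n) contains one of the patterns 4321, 45312 and 456123, then w has an induced occurrence of one of these three patterns; that is, there exist a pattern p among 4321, 45312, 456123 (say p ∈ S_m) and positions 1 ≤ i_1 < ⋯ < i_m ≤ n forming an occurrence of p in w such that w maps the set {i_1,…,i_m} onto itself. -/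
/-- `π` has an induced occurrence of the pattern `p`: an occurrence at positions
`i₁ < ⋯ < iₘ` such that `π` maps the set `{i₁, …, iₘ}` onto itself. -/
def HasInducedOccurrence {n m : ℕ} (π : Equiv.Perm (Fin n)) (p : Equiv.Perm (Fin m)) : Prop :=
  ∃ f : Fin m → Fin n, StrictMono f ∧ (∀ j k : Fin m, π (f j) < π (f k) ↔ p j < p k) ∧
    ∀ j : Fin m, ∃ j' : Fin m, π (f j) = f j'

/-- A strictly increasing tuple of positions on which `w` acts by the permutation `p` of the
indices is an induced occurrence of `p`. -/
theorem hasInducedOccurrence_of_apply {n m : ℕ} {w : Equiv.Perm (Fin n)} {p : Equiv.Perm (Fin m)}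
    (f : Fin m → Fin n) (hf : StrictMono f) (h : ∀ j, w (f j) = f (p j)) :
    HasInducedOccurrence w p :=
  ⟨f, hf, fun j k => by rw [h, h, hf.lt_iff_lt], fun j => ⟨p j, h j⟩⟩

/-- Nested arcs form an induced 4321. -/
theorem induced_of_nested {n : ℕ} {w : Equiv.Perm (Fin n)} (hw : ∀ i, w (w i) = i)
    {a b : Fin n} (h1 : a < b) (h2 : b < w b) (h3 : w b < w a) :
    HasInducedOccurrence w p4321 := by
  refine hasInducedOccurrence_of_apply ![a, b, w b, w a] ?_ ?_
  · rw [Fin.strictMono_iff_lt_succ]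
    intro i
    fin_cases i <;> assumption
  · intro j
    fin_cases j <;> simp [p4321, hw]

/-- Crossing arcs around a fixed point form an induced 45312. -/
theorem induced_of_crossing_fixed {n : ℕ} {w : Equiv.Perm (Fin n)} (hw : ∀ i, w (w i) = i)
    {a b c : Fin n} (h1 : a < b) (h2 : b < c) (hc : w c = c) (h3 : c < w a) (h4 : w a < w b) :
    HasInducedOccurrence w p45312 := by
  refine hasInducedOccurrence_of_apply ![a, b, c, w a, w b] ?_ ?_
  · rw [Fin.strictMono_iff_lt_succ]
    intro i
    fin_cases i <;> assumption
  · intro j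
    fin_cases j <;> simp [p45312, hw, hc]

/-- Three mutually crossing arcs form an induced 456123. -/
theorem induced_of_three_crossing {n : ℕ} {w : Equiv.Perm (Fin n)} (hw : ∀ i, w (w i) = i)
    {a b c : Fin n} (h1 : a < b) (h2 : b < c) (h3 : c < w a) (h4 : w a < w b) (h5 : w b < w c) :
    HasInducedOccurrence w p456123 := by
  refine hasInducedOccurrence_of_apply ![a, b, c, w a, w b, w c] ?_ ?_
  · rw [Fin.strictMono_iff_lt_succ]
    intro i
    fin_cases i <;> assumption
  · intro j
    fin_cases j <;> simp [p456123, hw]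

/-- Without nested arcs, an inversion goes from a non-closer to a non-opener, and its two
positions are not both fixed. -/
theorem inversion_cases {n : ℕ} {w : Equiv.Perm (Fin n)} (hw : ∀ i, w (w i) = i)
    (hN : ¬ HasInducedOccurrence w p4321) {i j : Fin n} (hij : i < j) (hji : w j < w i) :
    i ≤ w i ∧ w j ≤ j ∧ (i < w i ∨ w j < j) := by
  have hj : w j ≤ j := by
    by_contra! h
    exact hN (induced_of_nested hw hij h hji)
  have hi : i ≤ w i := by
    by_contra! h
    -- `i` and `j` are then both closers, and the arc `w i, i` lies inside `w j, j`.
    exact hN (induced_of_nested hw hji (by rwa [hw]) (by rwa [hw, hw]))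
  exact ⟨hi, hj, by grind⟩

/-- If an involution `w ∈ I(Sₙ)` contains one of the patterns 4321, 45312 and
456123, then `w` has an *induced* occurrence of one of these three patterns, i.e.
an occurrence whose set of positions is mapped onto itself by `w`. -/
theorem induced_occurrence_of_contains {n : ℕ} (w : Equiv.Perm (Fin n))
    (hw : IsInvolution w)
    (h : ContainsPattern w p4321 ∨ ContainsPattern w p45312 ∨ ContainsPattern w p456123) :
    HasInducedOccurrence w p4321 ∨ HasInducedOccurrence w p45312 ∨
      HasInducedOccurrence w p456123 := by
  have hinv : ∀ i, w (w i) = i := fun i => by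
    rw [← Equiv.Perm.mul_apply, show w * w = 1 from hw, Equiv.Perm.one_apply]
  by_contra! hno
  obtain ⟨hN, hF, hT⟩ := hno
  rcases h with ⟨f, hf, hp⟩ | ⟨f, hf, hp⟩ | ⟨f, hf, hp⟩
  · have inv : ∀ j k : Fin 4, j < k → p4321 k < p4321 j →
        f j ≤ w (f j) ∧ w (f k) ≤ f k ∧ (f j < w (f j) ∨ w (f k) < f k) :=
      fun j k hjk hkj => inversion_cases hinv hN (hf hjk) ((hp k j).2 hkj)
    have h01 := inv 0 1 (by decide) (by decide)
    have h12 := inv 1 2 (by decide) (by decide)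
    have h23 := inv 2 3 (by decide) (by decide)
    -- The two middle positions are both fixed, but fixed points form no inversion.
    grind
  · have inv : ∀ j k : Fin 5, j < k → p45312 k < p45312 j →
        f j ≤ w (f j) ∧ w (f k) ≤ f k ∧ (f j < w (f j) ∨ w (f k) < f k) :=
      fun j k hjk hkj => inversion_cases hinv hN (hf hjk) ((hp k j).2 hkj)
    have h02 := inv 0 2 (by decide) (by decide)
    have h23 := inv 2 3 (by decide) (by decide)
    have hfix : w (f 2) = f 2 := le_antisymm h02.2.1 h23.1
    have hlt : w (f 2) < w (f 0) := (hp 2 0).2 (by decide)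
    rw [hfix] at hlt
    exact hF (induced_of_crossing_fixed hinv (hf (by decide : (0 : Fin 5) < 1))
      (hf (by decide : (1 : Fin 5) < 2)) hfix hlt ((hp 0 1).2 (by decide)))
  · have h01 : f 0 < f 1 := hf (by decide)
    have h12 : f 1 < f 2 := hf (by decide)
    have h23 : f 2 < f 3 := hf (by decide)
    have h34 : f 3 < f 4 := hf (by decide)
    have h45 : f 4 < f 5 := hf (by decide)
    have v34 : w (f 3) < w (f 4) := (hp 3 4).2 (by decide)
    have v45 : w (f 4) < w (f 5) := (hp 4 5).2 (by decide)
    have v50 : w (f 5) < w (f 0) := (hp 5 0).2 (by decide)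
    have v01 : w (f 0) < w (f 1) := (hp 0 1).2 (by decide)
    have v12 : w (f 1) < w (f 2) := (hp 1 2).2 (by decide)
    have left : w (f 0) ≤ f 2 := by
      by_contra! h
      exact hT (induced_of_three_crossing hinv h01 h12 h v01 v12)
    -- The arcs of `i₄, i₅, i₆`, indexed by their left ends `w i₄ < w i₅ < w i₆`.
    have right : f 3 ≤ w (f 5) := by
      by_contra! h
      exact hT (induced_of_three_crossing hinv v34 v45 (by rwa [hinv]) (by rwa [hinv, hinv])
        (by rwa [hinv, hinv]))
    exact absurd v50 (not_lt.2 (left.trans (h23.le.trans right)))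
end

section
/- Let w ∈ I(S^B_n) be an involution of the group of signed permutations. Then φ(w·s̲^B_0) = φ(w)·s̲_0, and for every i ∈ [n−1]: φ(w·s̲^B_i) = φ(w)·s̲_i if s_i w s_i = s_i' w s_i' ≠ w, and φ(w·s̲^B_i) = φ(w)·s̲_i·s̲_i' otherwise. Here the underlined actions s̲^B_j are taken in the Coxeter system of S^B_n and the underlined actions s̲_0, s̲_i, s̲_i' are taken in the Coxeter system of the symmetric group S([±n]). -/
/-!
Write `s = sᵢ`, `s' = sᵢ'` with `i ≥ 1`, two commuting involutions with `sᴮᵢ = s s'`. Conjugation by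
`x ↦ -x` exchanges `s` and `s'` and fixes `w`, so `w` commutes with `s` if and only if it commutes
with `s'` (`sNeg_conj_eq_iff`).

* If `w` commutes with `s`, it commutes with `s'` and `s s'`, and both sides equal `w s s'`.
* If `s w s ≠ w` and `s w s ≠ s' w s'`, then `w` commutes with neither `s s'` nor `s'`, and both
  sides equal `s' s w s s'`.
* If `s w s = s' w s' ≠ w`, then `w` commutes with `s s'` but not with `s`. Hence `w` permutes the
  2-cycles `(i, i+1)` and `(-i, -i-1)` of `s s'` and does not fix the first, so it exchanges them:
  `w s = s' w` (`mul_sPos_eq_sNeg_mul`). Therefore `w s s' = s' w s' = s w s`.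

The first two cases are computations valid in any group (`uAct_mul_of_not`); the last one uses the
cycle structure of `s s'`.
-/

open scoped Classical

/-- The transposition `sᵢ = (i, i+1)` of the symmetric group on `[±n] ⊆ ℤ`. -/
def sPos (i : ℕ) : Equiv.Perm ℤ := Equiv.swap (i : ℤ) ((i : ℤ) + 1)

/-- The transposition `sᵢ' = (-i, -i-1)` of the symmetric group on `[±n] ⊆ ℤ`. -/
def sNeg (i : ℕ) : Equiv.Perm ℤ := Equiv.swap (-(i : ℤ)) (-(i : ℤ) - 1)

/-- The transposition `s₀ = (1, -1)`. -/
def s0 : Equiv.Perm ℤ := Equiv.swap 1 (-1)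

/-- The Coxeter generator `sᴮᵢ` of the group of signed permutations:
`sᴮ₀ = s₀` and `sᴮᵢ = sᵢ sᵢ'` for `i ≥ 1`. -/
def sB (i : ℕ) : Equiv.Perm ℤ := if i = 0 then s0 else sPos i * sNeg i

/-- The right action of the symbol `t̲` (for an involutive generator `t`) on a group:
`w · t̲ = w t` if `t w t = w`, and `w · t̲ = t w t` otherwise. -/
noncomputable def uAct {G : Type*} [Group G] (w t : G) : G :=
  if t * w * t = w then w * t else t * w * t

theorem sPos_mul_self (i : ℕ) : sPos i * sPos i = 1 := Equiv.swap_mul_self _ _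

theorem sNeg_mul_self (i : ℕ) : sNeg i * sNeg i = 1 := Equiv.swap_mul_self _ _

/-- The transpositions `sᵢ` and `sᵢ'` have disjoint supports when `i ≥ 1`. -/
theorem sPos_sNeg_comm (i : ℕ) (hi : 1 ≤ i) : sPos i * sNeg i = sNeg i * sPos i := by
  ext x
  simp only [sPos, sNeg, Equiv.Perm.mul_apply, Equiv.swap_apply_def]
  grind

theorem sNeg_eq_neg_conj (i : ℕ) : sNeg i = Equiv.neg ℤ * sPos i * Equiv.neg ℤ := by
  ext x
  simp only [sPos, sNeg, Equiv.Perm.mul_apply, Equiv.swap_apply_def, Equiv.neg_apply]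
  grind

/-- A signed permutation commutes with `sᵢ` if and only if it commutes with `sᵢ'`. -/
theorem sNeg_conj_eq_iff (w : Equiv.Perm ℤ) (hsgn : ∀ i : ℤ, w (-i) = - w i) (i : ℕ) :
    sPos i * w * sPos i = w ↔ sNeg i * w * sNeg i = w := by
  have hN : Equiv.neg ℤ * Equiv.neg ℤ = 1 := by ext x; simp
  have hw : Equiv.neg ℤ * w * Equiv.neg ℤ = w := by ext x; simp [hsgn]
  have key : sNeg i * w * sNeg i = Equiv.neg ℤ * (sPos i * w * sPos i) * Equiv.neg ℤ := by
    rw [sNeg_eq_neg_conj]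
    conv_lhs => rw [← hw]
    have hN' : ∀ x, Equiv.neg ℤ * (Equiv.neg ℤ * x) = x := fun x => by
      rw [← mul_assoc, hN, one_mul]
    simp only [mul_assoc, hN']
  rw [key]
  constructor
  · intro h
    rw [h, hw]
  · intro h
    calc sPos i * w * sPos i
        = (Equiv.neg ℤ * Equiv.neg ℤ) * (sPos i * w * sPos i)
            * (Equiv.neg ℤ * Equiv.neg ℤ) := by rw [hN, one_mul, mul_one]
      _ = Equiv.neg ℤ * (Equiv.neg ℤ * (sPos i * w * sPos i) * Equiv.neg ℤ)
            * Equiv.neg ℤ := by simp only [mul_assoc]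
      _ = w := by rw [h, hw]

/-- A permutation commuting with `sᵢ sᵢ'` but not with `sᵢ` exchanges the 2-cycles `(i, i+1)` and
`(-i, -i-1)` of `sᵢ sᵢ'`. -/
theorem mul_sPos_eq_sNeg_mul (w : Equiv.Perm ℤ) (i : ℕ) (hi : 1 ≤ i)
    (ht : w * (sPos i * sNeg i) = (sPos i * sNeg i) * w) (hs : w * sPos i ≠ sPos i * w) :
    w * sPos i = sNeg i * w := by
  have hc : w * sPos i = Equiv.swap (w i) (w (i + 1)) * w := Equiv.mul_swap_eq_swap_mul _ _ _
  have h1 : w (i + 1) = (sPos i * sNeg i) (w i) := by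
    have h := congrArg (fun f : Equiv.Perm ℤ => f i) ht
    simp only [Equiv.Perm.mul_apply] at h ⊢
    rw [← h]
    congr 1
    simp only [sPos, sNeg, Equiv.swap_apply_def]
    grind
  have hne : w (i + 1) ≠ w i := fun h => by
    have := w.injective h
    omega
  -- `w (i + 1) ≠ w i` says that `sᵢ sᵢ'` moves `w i`, so `w i` lies in one of the two cycles.
  have hcases : (w i = i ∧ w (i + 1) = i + 1) ∨ (w i = i + 1 ∧ w (i + 1) = i) ∨
      (w i = -i ∧ w (i + 1) = -i - 1) ∨ (w i = -i - 1 ∧ w (i + 1) = -i) := by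
    simp only [sPos, sNeg, Equiv.Perm.mul_apply, Equiv.swap_apply_def] at h1
    grind
  rcases hcases with ⟨ha, hb⟩ | ⟨ha, hb⟩ | ⟨ha, hb⟩ | ⟨ha, hb⟩
  · exact absurd (by rw [hc, ha, hb, sPos]) hs
  · exact absurd (by rw [hc, ha, hb, sPos, Equiv.swap_comm]) hs
  · rw [hc, ha, hb, sNeg]
  · rw [hc, ha, hb, sNeg, Equiv.swap_comm]

/-- An involution `t` fixes `w` under conjugation exactly when `w` commutes with `t`. -/
theorem conj_eq_iff_comm {G : Type*} [Group G] {w t : G} (ht : t * t = 1) :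
    t * w * t = w ↔ w * t = t * w := by
  constructor
  · intro h
    nth_rewrite 2 [← h]
    rw [← mul_assoc, ← mul_assoc, ht, one_mul]
  · intro h
    rw [← h, mul_assoc, ht, mul_one]

/-- For commuting involutions `s`, `r` such that `w` commutes with both or with neither of them,
acting by `s r` agrees with acting by `s` and then by `r`, unless `s w s = r w r ≠ w`. -/
theorem uAct_mul_of_not {G : Type*} [Group G] (w s r : G) (hs : s * s = 1) (hr : r * r = 1)
    (hsr : s * r = r * s) (hiff : s * w * s = w ↔ r * w * r = w)
    (h : ¬ (s * w * s = r * w * r ∧ s * w * s ≠ w)) :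
    uAct w (s * r) = uAct (uAct w s) r := by
  have hconj : s * r * w * (s * r) = r * (s * w * s) * r := by
    nth_rewrite 1 [hsr]
    simp only [mul_assoc]
  by_cases hw : s * w * s = w
  · have hw' := hiff.1 hw
    have h2 : r * (w * s) * r = w * s := by
      calc r * (w * s) * r = r * w * (s * r) := by simp only [mul_assoc]
        _ = r * w * r * s := by rw [hsr]; simp only [mul_assoc]
        _ = w * s := by rw [hw']
    rw [uAct, if_pos (by rw [hconj, hw, hw']), uAct, uAct, if_pos hw, if_pos h2, mul_assoc]
  · have hcancel : ∀ x y : G, r * x * r = y → x = r * y * r := by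
      rintro x _ rfl
      calc x = (r * r) * x * (r * r) := by rw [hr, one_mul, mul_one]
        _ = r * (r * x * r) * r := by simp only [mul_assoc]
    have h1 : ¬ s * r * w * (s * r) = w := fun e =>
      h ⟨hcancel _ _ (hconj ▸ e), hw⟩
    have h2 : ¬ r * (s * w * s) * r = s * w * s := fun e => by
      -- conjugating by `s`, which commutes with `r`, shows that `w` commutes with `r`
      refine hw (hiff.2 ?_)
      calc r * w * r = (s * s) * (r * w * r) * (s * s) := by rw [hs, one_mul, mul_one]
        _ = s * ((s * r) * w * (r * s)) * s := by simp only [mul_assoc]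
        _ = s * (s * r * w * (s * r)) * s := by rw [← hsr]
        _ = (s * s) * w * (s * s) := by rw [hconj, e]; simp only [mul_assoc]
        _ = w := by rw [hs, one_mul, mul_one]
    rw [uAct, if_neg h1, uAct, uAct, if_neg hw, if_neg h2, hconj]

/-- Let `w ∈ I(S^B_n)` be an involution of the group of signed permutations
(realized inside the symmetric group of `[±n] ⊆ ℤ`, so that the inclusion map `φ`
is the identity).  Then `φ(w · s̲ᴮ₀) = φ(w) · s̲₀`, and for every `i ∈ [n-1]`:
`φ(w · s̲ᴮᵢ) = φ(w) · s̲ᵢ` if `sᵢ w sᵢ = sᵢ' w sᵢ' ≠ w`, and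
`φ(w · s̲ᴮᵢ) = φ(w) · s̲ᵢ · s̲ᵢ'` otherwise. -/
theorem uAct_signed_inclusion (n : ℕ) (w : Equiv.Perm ℤ) (hinv : w * w = 1)
    (hsgn : ∀ i : ℤ, w (-i) = - w i) (hsupp : ∀ i : ℤ, (n : ℤ) < |i| → w i = i) :
    uAct w (sB 0) = uAct w s0 ∧
    ∀ i : ℕ, 1 ≤ i → i + 1 ≤ n →
      ((sPos i * w * sPos i = sNeg i * w * sNeg i ∧ sPos i * w * sPos i ≠ w) →
        uAct w (sB i) = uAct w (sPos i)) ∧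
      (¬ (sPos i * w * sPos i = sNeg i * w * sNeg i ∧ sPos i * w * sPos i ≠ w) →
        uAct w (sB i) = uAct (uAct w (sPos i)) (sNeg i)) := by
  refine ⟨by simp [sB], fun i hi _ => ?_⟩
  have hs := sPos_mul_self i
  have hr := sNeg_mul_self i
  have hsr := sPos_sNeg_comm i hi
  have hB : sB i = sPos i * sNeg i := by rw [sB, if_neg (by omega)]
  rw [hB]
  refine ⟨fun ⟨h, hne⟩ => ?_, uAct_mul_of_not w _ _ hs hr hsr (sNeg_conj_eq_iff w hsgn i)⟩
  have htt : (sPos i * sNeg i) * (sPos i * sNeg i) = 1 := by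
    nth_rewrite 2 [hsr]
    rw [mul_assoc, ← mul_assoc (sNeg i), hr, one_mul, hs]
  have ht : sPos i * sNeg i * w * (sPos i * sNeg i) = w := by
    calc sPos i * sNeg i * w * (sPos i * sNeg i)
        = sNeg i * (sPos i * w * sPos i) * sNeg i := by
          nth_rewrite 1 [hsr]
          simp only [mul_assoc]
      _ = (sNeg i * sNeg i) * w * (sNeg i * sNeg i) := by rw [h]; simp only [mul_assoc]
      _ = w := by rw [hr, one_mul, mul_one]
  have hswap := mul_sPos_eq_sNeg_mul w i hi ((conj_eq_iff_comm htt).1 ht)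
    (fun e => hne ((conj_eq_iff_comm hs).2 e))
  rw [uAct, if_pos ht, uAct, if_neg hne, h, ← mul_assoc, hswap]
end
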